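/- arXiv:2102.01188 — 3 statements merged into one kernel-verified Lean document; each statement's English description precedes it below -/
import Mathlib

section
/- For every $k \ge 1$, $s \ge 4k$ and $n \ge 0$, the maximum $N$ such that there exists a $(C_N,s)$-successful adaptive strategy with $n$ tests is $N_c(n,s) = 2^n(s-4k)+4k$. -/
/-!
Write `x = s - 4k`. Peeling off the first test shows that `n + 1` tests suffice from a candidate
set `D` iff `|D| ≤ s` already, or some test `T` leaves both `Γ (T ∩ D)` and `Γ (D \ T)` winnable
with `n` tests (`successful_succ`). Both bounds are inductions along this recursion, driven by
the fact that one test halves a set and the motion then enlarges it by at most, and at least,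
`2k` (or fills the cycle): the map `d ↦ d / 2 + 2k` sends `2 ^ (m + 1) * x + 4k` to `2 ^ m * x + 4k`.

* Strategy: the candidates always lie in an arc, which is cut into two halves; a half of length
  `L` lies in an arc of length `L + 2k` after the motion (`successful_of_subset_arc`).
* Optimality: the adversary keeps the larger part. A nonempty set `A` of vertices satisfies
  `|Γ_k(A)| ≥ min N (|A| + 2k)` (`card_GammaC`), because a nonempty set closed under the
  rotation is the whole cycle, so `A ∪ (A + 1)` gains a vertex, and up to a rotation one step
  of the motion performs this enlargement twice.
-/

open Finset

/-- One-step neighborhood on the cycle `C_N` (vertices `1..N`, loop at every vertex). -/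
def cycStep (N : ℕ) (A : Finset ℕ) : Finset ℕ :=
  (Finset.Icc 1 N).filter fun j => ∃ i ∈ A, j = i ∨ i + 1 = j ∨ j + 1 = i ∨
    (i = N ∧ j = 1) ∨ (i = 1 ∧ j = N)

/-- One-step neighborhood on the path `P_N` (vertices `1..N`, loop at every vertex). -/
def pathStep (N : ℕ) (A : Finset ℕ) : Finset ℕ :=
  (Finset.Icc 1 N).filter fun j => ∃ i ∈ A, j = i ∨ i + 1 = j ∨ j + 1 = i

/-- `k`-neighborhood on the cycle `C_N`. -/
def GammaC (N k : ℕ) (A : Finset ℕ) : Finset ℕ := (cycStep N)^[k] A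

/-- `k`-neighborhood on the path `P_N`. -/
def GammaP (N k : ℕ) (A : Finset ℕ) : Finset ℕ := (pathStep N)^[k] A

/-- Candidate sets `𝒟_i` for an adaptive strategy `σ` (mapping the list of previous
answers to the next test set), an answer sequence `y`, expansion `Γ`, and initial
candidate set `D0`. -/
def Dadapt (Γ : Finset ℕ → Finset ℕ) (σ : List Bool → Finset ℕ) (D0 : Finset ℕ)
    (y : ℕ → Bool) : ℕ → Finset ℕ
  | 0 => D0
  | i + 1 =>
      let D := Dadapt Γ σ D0 y i
      let T := σ ((List.range i).map y)
      if y i then Γ (T ∩ D) else Γ (D \ T)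

/-- There is an adaptive strategy with `n` tests that is successful with accuracy `s`:
for every consistent answer sequence some candidate set has size at most `s`. -/
def Successful (Γ : Finset ℕ → Finset ℕ) (D0 : Finset ℕ) (n s : ℕ) : Prop :=
  ∃ σ : List Bool → Finset ℕ, ∀ y : ℕ → Bool,
    (∀ i ≤ n, (Dadapt Γ σ D0 y i).Nonempty) →
    ∃ i ≤ n, (Dadapt Γ σ D0 y i).card ≤ s

/-- `(C_N, s)`-successful adaptive strategy with `n` tests exists. -/
def cycSuccessful (N k n s : ℕ) : Prop :=
  Successful (GammaC N k) (Finset.Icc 1 N) n s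

/-- `(P_N, s)`-successful adaptive strategy with `n` tests exists. -/
def pathSuccessful (N k n s : ℕ) : Prop :=
  Successful (GammaP N k) (Finset.Icc 1 N) n s

/-- `s^*(C_N)`: minimum accuracy achievable on the cycle. -/
noncomputable def sStarC (N k : ℕ) : ℕ := sInf {s | ∃ n, cycSuccessful N k n s}

/-- `s^*(P_N)`: minimum accuracy achievable on the path. -/
noncomputable def sStarP (N k : ℕ) : ℕ := sInf {s | ∃ n, pathSuccessful N k n s}

/-! ### Recursion on the number of tests -/

/-- Candidate set after test `T` with answer `b` and the following motion. -/
def stepD (Γ : Finset ℕ → Finset ℕ) (T D : Finset ℕ) (b : Bool) : Finset ℕ :=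
  if b then Γ (T ∩ D) else Γ (D \ T)

/-- Peeling off the first test rather than the last one. -/
lemma Dadapt_succ' (Γ : Finset ℕ → Finset ℕ) (σ : List Bool → Finset ℕ) (D : Finset ℕ)
    (y : ℕ → Bool) (i : ℕ) :
    Dadapt Γ σ D y (i + 1) =
      Dadapt Γ (fun l => σ (y 0 :: l)) (stepD Γ (σ []) D (y 0)) (fun j => y (j + 1)) i := by
  induction i with
  | zero => rfl
  | succ i ih =>
    have hl : (List.range (i + 1)).map y = y 0 :: (List.range i).map (fun j => y (j + 1)) := by
      rw [List.range_succ_eq_map, List.map_cons, List.map_map]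
      rfl
    rw [Dadapt, ih, hl]
    rfl

lemma successful_zero {Γ : Finset ℕ → Finset ℕ} {D : Finset ℕ} {s : ℕ}
    (h : Successful Γ D 0 s) : D.card ≤ s := by
  obtain ⟨σ, hσ⟩ := h
  rcases D.eq_empty_or_nonempty with rfl | hD
  · simp
  obtain ⟨i, hi, h⟩ := hσ (fun _ => true) (by
    intro i hi
    obtain rfl : i = 0 := by omega
    exact hD)
  obtain rfl : i = 0 := by omega
  exact h

lemma successful_of_card {Γ : Finset ℕ → Finset ℕ} {D : Finset ℕ} {n s : ℕ}
    (h : D.card ≤ s) : Successful Γ D n s :=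
  ⟨fun _ => ∅, fun _ _ => ⟨0, Nat.zero_le _, h⟩⟩

lemma successful_succ {Γ : Finset ℕ → Finset ℕ} {D : Finset ℕ} {n s : ℕ} :
    Successful Γ D (n + 1) s ↔
      D.card ≤ s ∨ ∃ T, ∀ b, Successful Γ (stepD Γ T D b) n s := by
  constructor
  · rintro ⟨σ, hσ⟩
    by_cases hc : D.card ≤ s
    · exact Or.inl hc
    refine Or.inr ⟨σ [], fun b => ⟨fun l => σ (b :: l), fun y hy => ?_⟩⟩
    -- The answer sequence `b, y 0, y 1, …`.
    let z : ℕ → Bool := fun i => Nat.casesOn i b y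
    have hz : ∀ i, Dadapt Γ σ D z (i + 1) =
        Dadapt Γ (fun l => σ (b :: l)) (stepD Γ (σ []) D b) y i :=
      fun i => Dadapt_succ' Γ σ D z i
    obtain ⟨i, hi, h⟩ := hσ z (by
      intro i hi
      cases i with
      | zero =>
        exact Finset.card_pos.mp (show 0 < D.card by omega)
      | succ i => rw [hz]; exact hy i (by omega))
    cases i with
    | zero => exact absurd h hc
    | succ i => exact ⟨i, by omega, by rw [← hz]; exact h⟩
  · rintro (hc | ⟨T, hT⟩)
    · exact successful_of_card hc
    choose τ hτ using hT
    let σ : List Bool → Finset ℕ := fun l => match l with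
      | [] => T
      | b :: l => τ b l
    refine ⟨σ, fun y hy => ?_⟩
    have hz : ∀ i, Dadapt Γ σ D y (i + 1) =
        Dadapt Γ (τ (y 0)) (stepD Γ T D (y 0)) (fun j => y (j + 1)) i :=
      fun i => Dadapt_succ' Γ σ D y i
    obtain ⟨i, hi, h⟩ := hτ (y 0) (fun j => y (j + 1)) (by
      intro i hi
      rw [← hz]
      exact hy _ (by omega))
    exact ⟨i + 1, by omega, by rw [hz]; exact h⟩

/-! ### Arcs and the halving strategy -/

/-- The arc of `C_N` covering the `L` consecutive residues `a, a + 1, …, a + L - 1` modulo `N`.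
The starting point is an integer, so that extending an arc backwards needs no wrap-around. -/
noncomputable def arc (N : ℕ) (a : ℤ) (L : ℕ) : Finset ℕ := by
  classical
  exact (Finset.Icc 1 N).filter fun j => ∃ t : ℕ, t < L ∧ (N : ℤ) ∣ (j : ℤ) - a - t

lemma mem_arc {N : ℕ} {a : ℤ} {L j : ℕ} : j ∈ arc N a L ↔
    (1 ≤ j ∧ j ≤ N) ∧ ∃ t : ℕ, t < L ∧ (N : ℤ) ∣ (j : ℤ) - a - t := by
  simp [arc]

lemma card_arc_le (N : ℕ) (a : ℤ) (L : ℕ) : (arc N a L).card ≤ L := by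
  have : arc N a L ⊆ (Finset.range L).image
      (fun t : ℕ => ((a + t - 1) % (N : ℤ) + 1).toNat) := by
    intro j hj
    obtain ⟨⟨h1, h2⟩, t, ht, hd⟩ := mem_arc.mp hj
    refine Finset.mem_image.mpr ⟨t, Finset.mem_range.mpr ht, ?_⟩
    have h3 : (a + t - 1) % (N : ℤ) = ((j : ℤ) - 1) % N :=
      (Int.emod_eq_emod_iff_emod_sub_eq_zero.mpr (Int.emod_eq_zero_of_dvd (by
        have h4 : a + t - 1 - ((j : ℤ) - 1) = -((j : ℤ) - a - t) := by ring
        rw [h4]; exact hd.neg_right)))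
    rw [h3, Int.emod_eq_of_lt (by omega) (by omega)]
    omega
  calc _ ≤ _ := Finset.card_le_card this
    _ ≤ _ := Finset.card_image_le
    _ = L := Finset.card_range L

lemma cycStep_mono {N : ℕ} {A B : Finset ℕ} (h : A ⊆ B) : cycStep N A ⊆ cycStep N B := by
  intro j hj
  simp only [cycStep, Finset.mem_filter] at hj ⊢
  obtain ⟨hj, i, hi, h'⟩ := hj
  exact ⟨hj, i, h hi, h'⟩

lemma cycStep_arc (N : ℕ) (a : ℤ) (L : ℕ) : cycStep N (arc N a L) ⊆ arc N (a - 1) (L + 2) := by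
  intro j hj
  simp only [cycStep, Finset.mem_filter, Finset.mem_Icc] at hj
  obtain ⟨hj, i, hi, h⟩ := hj
  obtain ⟨hi, t, ht, c, hc⟩ := mem_arc.mp hi
  refine mem_arc.mpr ⟨hj, ?_⟩
  rcases h with h | h | h | ⟨h, h'⟩ | ⟨h, h'⟩
  · exact ⟨t + 1, by omega, c, by rw [← hc]; push_cast; omega⟩
  · exact ⟨t + 2, by omega, c, by rw [← hc]; push_cast; omega⟩
  · exact ⟨t, by omega, c, by rw [← hc]; omega⟩
  -- Crossing the edge between `N` and `1` shifts the quotient by one.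
  · exact ⟨t + 2, by omega, c - 1, by rw [mul_sub, ← hc]; push_cast; omega⟩
  · exact ⟨t, by omega, c + 1, by rw [mul_add, ← hc]; omega⟩

lemma GammaC_subset_arc {N : ℕ} (k : ℕ) {A : Finset ℕ} {a : ℤ} {L : ℕ} (h : A ⊆ arc N a L) :
    GammaC N k A ⊆ arc N (a - k) (L + 2 * k) := by
  induction k with
  | zero => simpa [GammaC] using h
  | succ k ih =>
    rw [GammaC, Function.iterate_succ_apply']
    refine (cycStep_mono ih).trans ((cycStep_arc _ _ _).trans (le_of_eq ?_))
    congr 1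
    push_cast
    ring

lemma successful_of_subset_arc {N k s : ℕ} (hs : 4 * k ≤ s) (m : ℕ) :
    ∀ (D : Finset ℕ) (a : ℤ), D ⊆ arc N a (2 ^ m * (s - 4 * k) + 4 * k) →
      Successful (GammaC N k) D m s := by
  induction m with
  | zero =>
    intro D a h
    apply successful_of_card
    have := (Finset.card_le_card h).trans (card_arc_le _ _ _)
    omega
  | succ m ih =>
    intro D a h
    -- Half of the length `2 ^ (m + 1) * (s - 4 * k) + 4 * k` of the current arc.
    obtain ⟨H, hH⟩ : ∃ H, H = 2 ^ m * (s - 4 * k) + 2 * k := ⟨_, rfl⟩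
    have hlen : 2 ^ (m + 1) * (s - 4 * k) + 4 * k = H + H := by rw [hH]; ring
    have hnext : 2 ^ m * (s - 4 * k) + 4 * k = H + 2 * k := by rw [hH]; ring
    rw [hlen] at h
    rw [hnext] at ih
    refine successful_succ.mpr (Or.inr ⟨arc N a H, fun b => ?_⟩)
    cases b with
    | true =>
      exact ih _ _ (GammaC_subset_arc k Finset.inter_subset_left)
    | false =>
      refine ih _ (a + H - k) (GammaC_subset_arc k ?_)
      intro j hj
      obtain ⟨hj, hn⟩ := Finset.mem_sdiff.mp hj
      obtain ⟨hj, t, ht, hd⟩ := mem_arc.mp (h hj)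
      have htH : H ≤ t := by
        by_contra hlt
        exact hn (mem_arc.mpr ⟨hj, t, by omega, hd⟩)
      refine mem_arc.mpr ⟨hj, t - H, by omega, ?_⟩
      have : (j : ℤ) - (a + H) - ((t - H : ℕ) : ℤ) = j - a - t := by omega
      rwa [this]

/-! ### Vertex expansion on the cycle -/

/-- The rotation of the cycle by one vertex. -/
def rot (N j : ℕ) : ℕ := if j = N then 1 else j + 1

/-- The enlargement `A ∪ (A + 1)` of a set of vertices of the cycle. -/
def grow (N : ℕ) (A : Finset ℕ) : Finset ℕ := A ∪ A.image (rot N)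

lemma grow_subset {N : ℕ} {A : Finset ℕ} (h : A ⊆ Finset.Icc 1 N) :
    grow N A ⊆ Finset.Icc 1 N := by
  refine Finset.union_subset h (Finset.image_subset_iff.mpr fun j hj => ?_)
  have := Finset.mem_Icc.mp (h hj)
  rw [Finset.mem_Icc, rot]
  split_ifs <;> omega

lemma eq_Icc_of_rot_closed {N : ℕ} {A : Finset ℕ} (hA : A.Nonempty) (h : A ⊆ Finset.Icc 1 N)
    (hr : A.image (rot N) ⊆ A) : A = Finset.Icc 1 N := by
  have up : ∀ a ∈ A, ∀ d, a + d ≤ N → a + d ∈ A := by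
    intro a ha d
    induction d with
    | zero => intro _; exact ha
    | succ d ih =>
      intro hd
      have h1 := hr (Finset.mem_image_of_mem _ (ih (by omega)))
      rwa [rot, if_neg (by omega)] at h1
  obtain ⟨a, ha⟩ := hA
  have ha' := Finset.mem_Icc.mp (h ha)
  have hN : N ∈ A := by
    have := up a ha (N - a) (by omega)
    rwa [Nat.add_sub_cancel' ha'.2] at this
  have h1 : 1 ∈ A := by
    have := hr (Finset.mem_image_of_mem _ hN)
    rwa [rot, if_pos rfl] at this
  refine h.antisymm fun j hj => ?_
  have hj := Finset.mem_Icc.mp hj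
  have := up 1 h1 (j - 1) (by omega)
  rwa [Nat.add_sub_cancel' hj.1] at this

lemma card_grow {N : ℕ} {A : Finset ℕ} (hA : A.Nonempty) (h : A ⊆ Finset.Icc 1 N) :
    min N (A.card + 1) ≤ (grow N A).card := by
  by_cases hr : A.image (rot N) ⊆ A
  · have h1 := eq_Icc_of_rot_closed hA h hr
    have h2 : A.card = N := by rw [h1]; simp
    have h3 : A.card ≤ (grow N A).card := Finset.card_le_card Finset.subset_union_left
    omega
  · obtain ⟨x, hx, hxA⟩ := Finset.not_subset.mp hr
    have h1 : insert x A ⊆ grow N A :=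
      Finset.insert_subset (Finset.mem_union_right _ hx) Finset.subset_union_left
    have h2 := Finset.card_le_card h1
    rw [Finset.card_insert_of_notMem hxA] at h2
    omega

/-- One step of the motion is, up to a rotation, two successive enlargements `A ∪ (A + 1)`. -/
lemma grow_grow_subset {N : ℕ} {A : Finset ℕ} (h : A ⊆ Finset.Icc 1 N) :
    grow N (grow N A) ⊆ (cycStep N A).image (rot N) := by
  have mem : ∀ i ∈ A, i ∈ cycStep N A ∧ rot N i ∈ cycStep N A := by
    intro i hi
    have hi' := Finset.mem_Icc.mp (h hi)
    simp only [cycStep, Finset.mem_filter, Finset.mem_Icc]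
    refine ⟨⟨hi', i, hi, Or.inl rfl⟩, ?_, i, hi, ?_⟩
    · rw [rot]; split_ifs <;> omega
    · rw [rot]; split_ifs <;> omega
  have pred : ∀ i ∈ A, i ∈ (cycStep N A).image (rot N) := by
    intro i hi
    have hi' := Finset.mem_Icc.mp (h hi)
    refine Finset.mem_image.mpr ⟨if i = 1 then N else i - 1, ?_, ?_⟩
    · simp only [cycStep, Finset.mem_filter, Finset.mem_Icc]
      refine ⟨?_, i, hi, ?_⟩ <;> split_ifs <;> omega
    · rw [rot]; split_ifs <;> omega
  refine Finset.union_subset (Finset.union_subset pred ?_) (Finset.image_subset_image ?_)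
  · exact Finset.image_subset_image fun i hi => (mem i hi).1
  · exact Finset.union_subset (fun i hi => (mem i hi).1)
      (Finset.image_subset_iff.mpr fun i hi => (mem i hi).2)

lemma card_cycStep {N : ℕ} {A : Finset ℕ} (hA : A.Nonempty) (h : A ⊆ Finset.Icc 1 N) :
    min N (A.card + 2) ≤ (cycStep N A).card := by
  have h1 := card_grow hA h
  have h2 := card_grow (A := grow N A) (hA.mono Finset.subset_union_left) (grow_subset h)
  have h3 := (Finset.card_le_card (grow_grow_subset h)).trans Finset.card_image_le
  omega

lemma GammaC_subset {N : ℕ} (k : ℕ) {A : Finset ℕ} (h : A ⊆ Finset.Icc 1 N) :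
    GammaC N k A ⊆ Finset.Icc 1 N := by
  cases k with
  | zero => exact h
  | succ k =>
    rw [GammaC, Function.iterate_succ_apply']
    exact Finset.filter_subset _ _

lemma card_GammaC {N : ℕ} (k : ℕ) {A : Finset ℕ} (hA : A.Nonempty) (h : A ⊆ Finset.Icc 1 N) :
    min N (A.card + 2 * k) ≤ (GammaC N k A).card := by
  induction k with
  | zero => simp [GammaC]
  | succ k ih =>
    have hpos := hA.card_pos
    have hN : A.card ≤ N := by simpa using Finset.card_le_card h
    have hne : (GammaC N k A).Nonempty := Finset.card_pos.mp (by omega)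
    have h1 := card_cycStep hne (GammaC_subset k h)
    have h2 : GammaC N (k + 1) A = cycStep N (GammaC N k A) :=
      Function.iterate_succ_apply' _ _ _
    rw [h2]
    omega

/-! ### The adversary -/

lemma not_successful {N k s : ℕ} (hs : 4 * k ≤ s) (m : ℕ) :
    ∀ D : Finset ℕ, D ⊆ Finset.Icc 1 N → 2 ^ m * (s - 4 * k) + 4 * k < D.card →
      ¬ Successful (GammaC N k) D m s := by
  induction m with
  | zero =>
    intro D _ hc h
    have := successful_zero h
    omega
  | succ m ih =>
    intro D hD hc h
    have hN : D.card ≤ N := by simpa using Finset.card_le_card hD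
    have hx : s - 4 * k ≤ 2 ^ m * (s - 4 * k) := Nat.le_mul_of_pos_left _ (by positivity)
    rw [pow_succ', mul_assoc] at hc
    have key : ∀ X ⊆ D, D.card ≤ 2 * X.card → ¬ Successful (GammaC N k) (GammaC N k X) m s := by
      intro X hX hXc
      have hXI := hX.trans hD
      refine ih _ (GammaC_subset k hXI) ?_
      have := card_GammaC k (Finset.card_pos.mp (by omega)) hXI
      omega
    rcases successful_succ.mp h with h | ⟨T, hT⟩
    · omega
    have hsum : (T ∩ D).card + (D \ T).card = D.card := by
      rw [Finset.inter_comm]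
      exact Finset.card_inter_add_card_sdiff D T
    by_cases hb : D.card ≤ 2 * (T ∩ D).card
    · exact key _ Finset.inter_subset_right hb (hT true)
    · exact key _ Finset.sdiff_subset (by omega) (hT false)

/-- Theorem 1: for `k ≥ 1`, `s ≥ 4k` and `n ≥ 0`, the maximum `N` admitting a
`(C_N,s)`-successful strategy with `n` tests is `N_c(n,s) = 2^n (s-4k) + 4k`. -/
theorem cycle_max_N (k s n : ℕ) (hk : 1 ≤ k) (hs : 4 * k ≤ s) :
    cycSuccessful (2 ^ n * (s - 4 * k) + 4 * k) k n s ∧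
    ∀ N, cycSuccessful N k n s → N ≤ 2 ^ n * (s - 4 * k) + 4 * k := by
  constructor
  -- The whole cycle is the arc of length `N` starting at vertex `1`.
  · refine successful_of_subset_arc hs n _ 1 fun j hj => ?_
    have hj := Finset.mem_Icc.mp hj
    exact mem_arc.mpr ⟨hj, j - 1, by omega, 0, by omega⟩
  · intro N h
    by_contra hN
    exact not_successful hs n _ (Finset.Subset.refl _) (by simpa using hN) h
end

section
/- Let $k \ge 1$, $n \ge 1$ and $1 \le l \le k$. Then the maximum $N$ such that there exists a $(P_N, 3k+l)$-successful adaptive strategy with $n$ tests satisfies $N_p(n, 3k+l) \ge 2nl + 4k$. -/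
/-!
The bound comes from an explicit strategy. Write `N = 2nl + 4k` and `s = 3k + l`. The first test is
the left half of the path, so afterwards the target is among the `3k + nl` vertices nearest to one
end: a half has `2k + nl` vertices and the `k`-neighborhood extends it in one direction only.

By reflection let that end be vertex `1`. When `j` tests remain, the target lies in
`[1, 3k + (j+1)l]`, and the next test is `[1, 2k + jl]`. A negative answer leaves at most
`k + l` consecutive vertices, whose `k`-neighborhood has at most `3k + l = s` vertices: the strategy
has succeeded. A positive answer leaves `[1, 2k + jl]`, whose `k`-neighborhood is `[1, 3k + jl]`, the
same situation with `j - 1` tests remaining. With `j = 0` the interval `[1, 3k + l]` has `s`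
vertices.

Only upper bounds on the candidate sets are needed, so a one-sided description of the
`k`-neighborhood (`mem_GammaP_imp`) is enough; the induction is `strategy_invariant`.
-/

open Finset

/-- Every vertex of the `k`-neighborhood is a vertex of the path at distance at most `k` from `A`,
provided `A` itself consists of vertices of the path. -/
lemma mem_GammaP_imp (N k : ℕ) (A : Finset ℕ) (hA : A ⊆ Finset.Icc 1 N) :
    ∀ x ∈ GammaP N k A, x ∈ Finset.Icc 1 N ∧ ∃ i ∈ A, x ≤ i + k ∧ i ≤ x + k := by
  induction k with
  | zero =>
    intro x hx
    exact ⟨hA hx, x, hx, le_rfl, le_rfl⟩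
  | succ k ih =>
    intro x hx
    unfold GammaP at hx ih
    rw [Function.iterate_succ_apply', pathStep, Finset.mem_filter] at hx
    obtain ⟨hxN, z, hz, hzx⟩ := hx
    obtain ⟨-, i, hi, h1, h2⟩ := ih z hz
    exact ⟨hxN, i, hi, by omega, by omega⟩

/-- The test made after the answers `L`: the `2k + (n - |L|)l` vertices nearest to one end of the
path. That end is the left one for the first test, and afterwards the one singled out by the first
answer. -/
def endTest (N k n l : ℕ) (L : List Bool) : Finset ℕ :=
  if L.headD true = true then
    (Finset.Icc 1 N).filter fun x => x ≤ 2 * k + (n - L.length) * l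
  else
    (Finset.Icc 1 N).filter fun x => N < x + (2 * k + (n - L.length) * l)

lemma Dadapt_subset (N k : ℕ) (σ : List Bool → Finset ℕ) (y : ℕ → Bool) (i : ℕ) :
    Dadapt (GammaP N k) σ (Finset.Icc 1 N) y i ⊆ Finset.Icc 1 N := by
  induction i with
  | zero => exact Finset.Subset.refl _
  | succ i ih =>
    intro x hx
    simp only [Dadapt] at hx
    split_ifs at hx
    · exact (mem_GammaP_imp N k _ (Finset.inter_subset_right.trans ih) x hx).1
    · exact (mem_GammaP_imp N k _ (Finset.sdiff_subset.trans ih) x hx).1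

/-- After `i + 1` tests, with `j` remaining, either the strategy has already succeeded or all
candidates lie among the `3k + (j+1)l` vertices nearest to the end given by the first answer. -/
lemma strategy_invariant (k n l : ℕ) (hk : 1 ≤ k) (y : ℕ → Bool) (i : ℕ) :
    ∀ j, i + 1 + j = n →
      let D := Dadapt (GammaP (2 * n * l + 4 * k) k) (endTest (2 * n * l + 4 * k) k n l)
        (Finset.Icc 1 (2 * n * l + 4 * k)) y
      (∃ t ≤ i + 1, (D t).card ≤ 3 * k + l) ∨
      (∀ x ∈ D (i + 1), if y 0 = true then x ≤ 3 * k + (j + 1) * l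
        else 2 * n * l + 4 * k < x + (3 * k + (j + 1) * l)) := by
  induction i with
  | zero =>
    intro j hj D
    right
    intro x hx
    have hn : (j + 1) * l = n * l := by rw [← hj]; ring
    have hN : 2 * n * l = 2 * (n * l) := by ring
    rw [hn]
    simp only [D, Dadapt, endTest, List.range_zero, List.map_nil, List.headD_nil,
      List.length_nil, if_true, Nat.sub_zero] at hx
    split_ifs at hx ⊢ with h0
    · obtain ⟨-, z, hz, h1, h2⟩ := mem_GammaP_imp _ k _ Finset.inter_subset_right x hx
      simp only [Finset.mem_inter, Finset.mem_filter] at hz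
      omega
    · obtain ⟨-, z, hz, h1, h2⟩ := mem_GammaP_imp _ k _ Finset.sdiff_subset x hx
      simp only [Finset.mem_sdiff, Finset.mem_filter, not_and, not_le] at hz
      have := hz.2 hz.1
      omega
  | succ i ih =>
    intro j hj D
    rcases ih (j + 1) (by omega) with ⟨t, ht, hc⟩ | hD
    · exact Or.inl ⟨t, by omega, hc⟩
    have hsub := Dadapt_subset (2 * n * l + 4 * k) k (endTest (2 * n * l + 4 * k) k n l) y (i + 1)
    have hlen : n - ((List.range (i + 1)).map y).length = j + 1 := by
      simp only [List.length_map, List.length_range]; omega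
    have hhead : ((List.range (i + 1)).map y).headD true = y 0 := by
      simp [List.range_succ_eq_map]
    have hstep : D (i + 1 + 1) = if y (i + 1) = true
        then GammaP (2 * n * l + 4 * k) k
          (endTest (2 * n * l + 4 * k) k n l ((List.range (i + 1)).map y) ∩ D (i + 1))
        else GammaP (2 * n * l + 4 * k) k
          (D (i + 1) \ endTest (2 * n * l + 4 * k) k n l ((List.range (i + 1)).map y)) := rfl
    change ∀ x ∈ D (i + 1), _ at hD
    change D (i + 1) ⊆ _ at hsub
    simp only [endTest, hlen, hhead] at hstep
    generalize 2 * n * l + 4 * k = N at *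
    have ha : (j + 1 + 1) * l = (j + 1) * l + l := by ring
    rw [ha] at hD
    generalize (j + 1) * l = a at *
    by_cases hy : y (i + 1) = true
    · right
      intro x hx
      rw [hstep, if_pos hy] at hx
      obtain ⟨-, z, hz, h1, h2⟩ :=
        mem_GammaP_imp N k _ (Finset.inter_subset_right.trans hsub) x hx
      split_ifs at hz ⊢ <;> simp only [Finset.mem_inter, Finset.mem_filter] at hz <;> omega
    · left
      refine ⟨i + 1 + 1, le_rfl, ?_⟩
      rw [hstep, if_neg hy]
      -- The candidates outside the test form a block of at most `k + l` vertices next to it.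
      by_cases h0 : y 0 = true
      · have : GammaP N k (D (i + 1) \ (Finset.Icc 1 N).filter fun x => x ≤ 2 * k + a) ⊆
            Finset.Icc (k + a + 1) (4 * k + a + l) := by
          intro x hx
          obtain ⟨-, z, hz, h1, h2⟩ :=
            mem_GammaP_imp N k _ (Finset.sdiff_subset.trans hsub) x hx
          simp only [Finset.mem_sdiff, Finset.mem_filter, not_and, not_le] at hz
          have h3 := hz.2 (hsub hz.1)
          have h4 := hD z hz.1
          rw [if_pos h0] at h4
          rw [Finset.mem_Icc]
          omega
        have := Finset.card_le_card this
        rw [Nat.card_Icc] at this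
        rw [if_pos h0]
        omega
      · have : GammaP N k (D (i + 1) \ (Finset.Icc 1 N).filter fun x => N < x + (2 * k + a)) ⊆
            Finset.Icc (N + 1 - (4 * k + a + l)) (N - (k + a)) := by
          intro x hx
          obtain ⟨-, z, hz, h1, h2⟩ :=
            mem_GammaP_imp N k _ (Finset.sdiff_subset.trans hsub) x hx
          simp only [Finset.mem_sdiff, Finset.mem_filter, not_and, not_lt] at hz
          have h3 := hz.2 (hsub hz.1)
          have h4 := hD z hz.1
          rw [if_neg h0] at h4
          rw [Finset.mem_Icc]
          omega
        have hc := Finset.card_le_card this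
        rw [Nat.card_Icc] at hc
        rw [if_neg h0]
        -- If `N < k + a` the truncated interval may still contain `0`; then `1 ≤ k` is needed.
        omega

/-- Theorem 3: for `n ≥ 1` and `1 ≤ l ≤ k`, `N_p(n, 3k+l) ≥ 2nl + 4k`, i.e. there
is a `(P_N, 3k+l)`-successful strategy with `n` tests for `N = 2nl + 4k`. -/
theorem path_Np_lower_small_s (k n l : ℕ) (hk : 1 ≤ k) (hn : 1 ≤ n)
    (hl : 1 ≤ l) (hlk : l ≤ k) :
    pathSuccessful (2 * n * l + 4 * k) k n (3 * k + l) := by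
  refine ⟨endTest (2 * n * l + 4 * k) k n l, fun y _ => ?_⟩
  obtain ⟨i, rfl⟩ : ∃ i, n = i + 1 := ⟨n - 1, by omega⟩
  rcases strategy_invariant k (i + 1) l hk y i 0 rfl with h | h
  · exact h
  refine ⟨i + 1, le_rfl, ?_⟩
  have hsub := Dadapt_subset (2 * (i + 1) * l + 4 * k) k
    (endTest (2 * (i + 1) * l + 4 * k) k (i + 1) l) y (i + 1)
  generalize 2 * (i + 1) * l + 4 * k = N at *
  rw [zero_add, one_mul] at h
  by_cases h0 : y 0 = true
  · simp only [if_pos h0] at h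
    have := Finset.card_le_card (t := Finset.Icc 1 (3 * k + l)) fun x hx =>
      Finset.mem_Icc.2 ⟨(Finset.mem_Icc.1 (hsub hx)).1, h x hx⟩
    simpa using this
  · simp only [if_neg h0] at h
    have := Finset.card_le_card (t := Finset.Icc (N + 1 - (3 * k + l)) N) fun x hx => by
      have h1 := h x hx
      have h2 := Finset.mem_Icc.1 (hsub hx)
      exact Finset.mem_Icc.2 ⟨by omega, h2.2⟩
    rw [Nat.card_Icc] at this
    omega
end

section
/- Let $k \ge 1$, $n \ge 0$ and $s \ge 4k$. Then the maximum $N$ such that there exists a $(P_N,s)$-successful adaptive strategy with $n$ tests satisfies $N_p(n,s) \ge (s-4k)2^n + k(2n+4)$. -/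
/-!
Every candidate set is kept inside an interval, and each test cuts that interval in two. A cut
enlarges each half by `k` at each of its ends, except at an end of the path, where nothing is
gained. Write `r = s - 4k`, and consider the lengths that `n` tests can handle:

* an interval with no end at an end of the path: `I (n+1) = 2 (I n - 2k)`, so
  `I n = r 2^n + 4k` (`Solvable.interior`);
* an interval with one end at an end of the path: `E (n+1) = (E n - k) + (I n - 2k)`, so
  `E n = r 2^n + 4k + kn` (`Solvable.left_end`, `Solvable.right_end`);
* the whole path: `F (n+1) = 2 (E n - k)`, so `F n = r 2^n + k (2n + 4)`.

All three recursions start from `s = r + 4k`. `Solvable` is a recursive form of success in which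
the test is chosen from the current candidate set; `Solvable.exists_strategy` assembles these
choices into one strategy defined on answer lists.
-/


open Finset

/-- From the candidate set `D`, tests can be chosen one after another so that the candidate set
after exactly `n` tests has at most `s` elements, whatever the answers. Inconsistent answers are
included: they lead to the empty set and do no harm. -/
def Solvable (Γ : Finset ℕ → Finset ℕ) (s : ℕ) : ℕ → Finset ℕ → Prop
  | 0, D => D.card ≤ s
  | n + 1, D => ∃ T : Finset ℕ, Solvable Γ s n (Γ (T ∩ D)) ∧ Solvable Γ s n (Γ (D \ T))

/-- The candidate sets after the first test are those of the residual strategy, which prepends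
the first answer to the answer list. -/
lemma Dadapt_succ_shift (Γ : Finset ℕ → Finset ℕ) (σ : List Bool → Finset ℕ) (D : Finset ℕ)
    (y : ℕ → Bool) (i : ℕ) :
    Dadapt Γ σ D y (i + 1) =
      Dadapt Γ (fun l => σ (y 0 :: l)) (if y 0 then Γ (σ [] ∩ D) else Γ (D \ σ []))
        (fun j => y (j + 1)) i := by
  induction i with
  | zero => simp [Dadapt]
  | succ i ih =>
    have h : (List.range (i + 1)).map y = y 0 :: (List.range i).map (fun j => y (j + 1)) := by
      rw [List.range_succ_eq_map]; simp [Function.comp_def]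
    rw [Dadapt, ih, h]
    rfl

lemma Solvable.exists_strategy {Γ : Finset ℕ → Finset ℕ} {s n : ℕ} {D : Finset ℕ}
    (h : Solvable Γ s n D) :
    ∃ σ : List Bool → Finset ℕ, ∀ y : ℕ → Bool, (Dadapt Γ σ D y n).card ≤ s := by
  induction n generalizing D with
  | zero => exact ⟨fun _ => ∅, fun _ => h⟩
  | succ n ih =>
    obtain ⟨T, h1, h0⟩ := h
    obtain ⟨σ1, hσ1⟩ := ih h1
    obtain ⟨σ0, hσ0⟩ := ih h0
    refine ⟨fun l => match l with
      | [] => T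
      | true :: l => σ1 l
      | false :: l => σ0 l, fun y => ?_⟩
    rw [Dadapt_succ_shift]
    cases hy : y 0
    · simpa [hy] using hσ0 _
    · simpa [hy] using hσ1 _

lemma GammaP_near {N k j : ℕ} {A : Finset ℕ} (hj : j ∈ GammaP N k A) :
    ∃ i ∈ A, j ≤ i + k ∧ i ≤ j + k := by
  induction k generalizing j with
  | zero => exact ⟨j, hj, by omega, by omega⟩
  | succ k ih =>
    rw [GammaP, Function.iterate_succ_apply'] at hj
    obtain ⟨-, m, hm, hmj⟩ := Finset.mem_filter.mp hj
    obtain ⟨i, hi, h1, h2⟩ := ih hm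
    exact ⟨i, hi, by omega, by omega⟩

lemma GammaP_subset {N k : ℕ} (hk : 1 ≤ k) (A : Finset ℕ) :
    GammaP N k A ⊆ Finset.Icc 1 N := by
  obtain ⟨k, rfl⟩ := Nat.exists_eq_add_of_le' hk
  rw [GammaP, Function.iterate_succ_apply']
  exact Finset.filter_subset _ _

/-- The neighborhood of a subset of an interval lies in the interval widened by `k` on both sides
and clipped to the path. -/
lemma GammaP_Ico {N k a b : ℕ} (hk : 1 ≤ k) {A : Finset ℕ} (hA : A ⊆ Finset.Ico a b) :
    GammaP N k A ⊆ Finset.Ico (max 1 (a - k)) (min (N + 1) (b + k)) := by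
  intro j hj
  have h1 := Finset.mem_Icc.mp (GammaP_subset hk A hj)
  obtain ⟨i, hi, h2, h3⟩ := GammaP_near hj
  have h4 := Finset.mem_Ico.mp (hA hi)
  rw [Finset.mem_Ico]
  omega

/-- Cutting an interval at `m`: it suffices to solve both widened and clipped halves. -/
lemma Solvable.cut {N k s n a b : ℕ} (hk : 1 ≤ k) {D : Finset ℕ} (hD : D ⊆ Finset.Ico a b)
    (m : ℕ)
    (hl : ∀ D' ⊆ Finset.Ico (max 1 (a - k)) (min (N + 1) (m + k)), Solvable (GammaP N k) s n D')
    (hr : ∀ D' ⊆ Finset.Ico (max 1 (m - k)) (min (N + 1) (b + k)), Solvable (GammaP N k) s n D') :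
    Solvable (GammaP N k) s (n + 1) D := by
  refine ⟨Finset.Ico a m, hl _ (GammaP_Ico hk ?_), hr _ (GammaP_Ico hk ?_)⟩
  · exact Finset.inter_subset_left
  · intro j hj
    obtain ⟨h1, h2⟩ := Finset.mem_sdiff.mp hj
    have h3 := Finset.mem_Ico.mp (hD h1)
    rw [Finset.mem_Ico] at h2 ⊢
    omega

lemma card_le_of_subset_Ico {a b c : ℕ} {D : Finset ℕ} (hD : D ⊆ Finset.Ico a b)
    (h : b ≤ a + c) : D.card ≤ c := by
  have := Finset.card_le_card hD
  rw [Nat.card_Ico] at this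
  omega

lemma Solvable.interior {N k r : ℕ} (hk : 1 ≤ k) (n a b : ℕ) (D : Finset ℕ)
    (hD : D ⊆ Finset.Ico a b) (hab : b ≤ a + (r * 2 ^ n + 4 * k)) :
    Solvable (GammaP N k) (r + 4 * k) n D := by
  induction n generalizing a b D with
  | zero => exact card_le_of_subset_Ico hD (by simpa using hab)
  | succ n ih =>
    rw [pow_succ, ← mul_assoc] at hab
    refine Solvable.cut hk hD (a + r * 2 ^ n + 2 * k) (fun D' h => ih _ _ D' h ?_)
      (fun D' h => ih _ _ D' h ?_) <;> omega

lemma Solvable.left_end {N k r : ℕ} (hk : 1 ≤ k) (n b : ℕ) (D : Finset ℕ)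
    (hD : D ⊆ Finset.Ico 1 b) (hb : b ≤ 1 + (r * 2 ^ n + 4 * k + k * n)) :
    Solvable (GammaP N k) (r + 4 * k) n D := by
  induction n generalizing b D with
  | zero => exact card_le_of_subset_Ico hD (by simpa using hb)
  | succ n ih =>
    rw [pow_succ, ← mul_assoc, mul_add] at hb
    refine Solvable.cut hk hD (1 + r * 2 ^ n + 3 * k + k * n) (fun D' h => ih _ D' ?_ le_rfl)
      (fun D' h => Solvable.interior hk n _ _ D' h ?_)
    · exact h.trans (Finset.Ico_subset_Ico (by omega) (by omega))
    · omega

lemma Solvable.right_end {N k r : ℕ} (hk : 1 ≤ k) (n a : ℕ) (D : Finset ℕ)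
    (hD : D ⊆ Finset.Ico a (N + 1)) (ha : N + 1 ≤ a + (r * 2 ^ n + 4 * k + k * n)) :
    Solvable (GammaP N k) (r + 4 * k) n D := by
  induction n generalizing a D with
  | zero => exact card_le_of_subset_Ico hD (by simpa using ha)
  | succ n ih =>
    rw [pow_succ, ← mul_assoc, mul_add] at ha
    -- The left part is an interior interval and gets length `I n - 2k = r 2^n + 2k`.
    refine Solvable.cut hk hD (a + r * 2 ^ n + 2 * k)
      (fun D' h => Solvable.interior hk n _ _ D' h ?_)
      (fun D' h => ih (max 1 (a + r * 2 ^ n + 2 * k - k)) D' ?_ ?_)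
    · omega
    · exact h.trans (Finset.Ico_subset_Ico le_rfl (by omega))
    · omega

/-- Theorem 5: for `k ≥ 1`, `n ≥ 0` and `s ≥ 4k`,
`N_p(n,s) ≥ (s-4k)·2^n + k(2n+4)`: there is a `(P_N,s)`-successful strategy with
`n` tests for `N = (s-4k)·2^n + k(2n+4)`. -/
theorem path_Np_lower (k n s : ℕ) (hk : 1 ≤ k) (hs : 4 * k ≤ s) :
    pathSuccessful ((s - 4 * k) * 2 ^ n + k * (2 * n + 4)) k n s := by
  obtain ⟨r, rfl⟩ := Nat.exists_eq_add_of_le' hs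
  rw [Nat.add_sub_cancel]
  generalize hN : r * 2 ^ n + k * (2 * n + 4) = N
  have key : Solvable (GammaP N k) (r + 4 * k) n (Finset.Icc 1 N) := by
    have hD : Finset.Icc 1 N ⊆ Finset.Ico 1 (N + 1) := fun j hj => by
      rw [Finset.mem_Icc] at hj
      rw [Finset.mem_Ico]
      omega
    cases n with
    | zero =>
      refine card_le_of_subset_Ico hD ?_
      simp only [pow_zero] at hN
      omega
    | succ n =>
      have hN' : N = 2 * (r * 2 ^ n + 3 * k + k * n) := by rw [← hN]; ring
      -- Each half gets length `E n - k`.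
      refine Solvable.cut hk hD (1 + r * 2 ^ n + 3 * k + k * n)
        (fun D' h => Solvable.left_end hk n _ D' (h.trans (Finset.Ico_subset_Ico ?_ le_rfl)) ?_)
        (fun D' h => Solvable.right_end hk n _ D'
          (h.trans (Finset.Ico_subset_Ico le_rfl ?_)) ?_) <;> omega
  obtain ⟨σ, hσ⟩ := key.exists_strategy
  exact ⟨σ, fun y _ => ⟨n, le_rfl, hσ y⟩⟩
end
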